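/- Let R > 0, let k ∈ {0, −1, −2}, and let Z₁, Z₂ be 2×2 complex matrices with R²·1 − ZᵢZᵢ* positive definite for i=1,2. Then (i/2π³) ∫_{U(2)_R} (det W)^k / ( det(W−Z₁) · det(W−Z₂) ) dV equals 1 if k = 0, and equals 0 if k = −1 or k = −2, where the integral over U(2)_R is the explicit parametrized iterated integral described below. -/

import Mathlib

noncomputable section

open scoped ComplexOrder

/-- The parametrization of `U(2)_R`:
`W(α,φ,θ,ψ) = Re^{iα}·[[e^{i(φ+ψ)/2}cos(θ/2), i e^{i(φ−ψ)/2}sin(θ/2)],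
[i e^{i(ψ−φ)/2}sin(θ/2), e^{−i(φ+ψ)/2}cos(θ/2)]]`. -/
def Wparam (R α φ θ ψ : ℝ) : Matrix (Fin 2) (Fin 2) ℂ :=
  ((R : ℂ) * Complex.exp (Complex.I * α)) •
    !![Complex.exp (Complex.I * (φ + ψ) / 2) * (Real.cos (θ / 2) : ℂ),
         Complex.I * Complex.exp (Complex.I * (φ - ψ) / 2) * (Real.sin (θ / 2) : ℂ);
       Complex.I * Complex.exp (Complex.I * (ψ - φ) / 2) * (Real.sin (θ / 2) : ℂ),
         Complex.exp (-Complex.I * (φ + ψ) / 2) * (Real.cos (θ / 2) : ℂ)]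

/-- `∫_{U(2)_R} g dV`, defined as the iterated integral of
`g(W(α,φ,θ,ψ)) · (R⁴/(8i)) e^{4iα} sinθ` over
`(α,φ,θ,ψ) ∈ [0,π)×[0,2π)×(0,π)×[−2π,2π)`; with this orientation
`∫_{U(2)_R} dV/(det W)² = −2π³i`. -/
def U2int (R : ℝ) (g : Matrix (Fin 2) (Fin 2) ℂ → ℂ) : ℂ :=
  ∫ α in (0 : ℝ)..Real.pi, ∫ φ in (0 : ℝ)..(2 * Real.pi),
    ∫ θ in (0 : ℝ)..Real.pi, ∫ ψ in (-(2 * Real.pi))..(2 * Real.pi),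
      g (Wparam R α φ θ ψ) * ((R : ℂ) ^ 4 / (8 * Complex.I)) *
        Complex.exp (4 * Complex.I * α) * (Real.sin θ : ℂ)

/-!
On `U(2)_R` the density `R⁴ e^{4iα}` is `(det W)²`, so integrating `g` against `dV` is integrating
`(det W)² g(W)` against a multiple of Haar measure. If `(det W)² g(W) = h(W⁻¹)` with `h` holomorphic
on the discs `{ω V : |ω| ≤ 1}`, `V ∈ U(2)_{1/R}`, then rotating `W` by the scalars `e^{iα}` and
applying the mean value property in `ω = e^{-iα}` shows that the integral is `-2π³i h(0)`.
Here `h(V) = (det V)^(-k) / (det(1 - Z₁V) det(1 - Z₂V))`, whose denominator does not vanish on these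
discs because `Z₁, Z₂ ∈ 𝔻⁺_R`, and `h(0)` is `1` for `k = 0` and `0` for `k < 0`.
-/

open scoped Matrix Real

section ScaledUnitary

/-- The set `U(n)_R = {R U : U ∈ U(n)}`, described by the equation `W W* = R² · 1`. -/
def scaledUnitary (n : Type*) [Fintype n] [DecidableEq n] (R : ℝ) : Set (Matrix n n ℂ) :=
  {W | W * Wᴴ = ((R ^ 2 : ℝ) : ℂ) • (1 : Matrix n n ℂ)}

/-- The domain `𝔻⁺_R` of matrices `Z` with `R² · 1 - Z Z*` positive definite. -/
def contractionDomain (n : Type*) [Fintype n] [DecidableEq n] (R : ℝ) : Set (Matrix n n ℂ) :=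
  {Z | (((R ^ 2 : ℝ) : ℂ) • (1 : Matrix n n ℂ) - Z * Zᴴ).PosDef}

variable {n : Type*} [Fintype n] [DecidableEq n] {R : ℝ}

lemma mul_smul_conjTranspose_of_mem_scaledUnitary (hR : R ≠ 0) {W : Matrix n n ℂ}
    (hW : W ∈ scaledUnitary n R) : W * (((R ^ 2 : ℝ) : ℂ)⁻¹ • Wᴴ) = 1 := by
  have hR2 : ((R ^ 2 : ℝ) : ℂ) ≠ 0 := by exact_mod_cast pow_ne_zero 2 hR
  rw [Matrix.mul_smul, show W * Wᴴ = _ from hW, inv_smul_smul₀ hR2]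

lemma inv_eq_of_mem_scaledUnitary (hR : R ≠ 0) {W : Matrix n n ℂ} (hW : W ∈ scaledUnitary n R) :
    W⁻¹ = ((R ^ 2 : ℝ) : ℂ)⁻¹ • Wᴴ :=
  Matrix.inv_eq_right_inv (mul_smul_conjTranspose_of_mem_scaledUnitary hR hW)

lemma isUnit_det_of_mem_scaledUnitary (hR : R ≠ 0) {W : Matrix n n ℂ}
    (hW : W ∈ scaledUnitary n R) : IsUnit W.det :=
  Matrix.isUnit_det_of_right_inverse (mul_smul_conjTranspose_of_mem_scaledUnitary hR hW)

lemma inv_mem_scaledUnitary (hR : R ≠ 0) {W : Matrix n n ℂ} (hW : W ∈ scaledUnitary n R) :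
    W⁻¹ ∈ scaledUnitary n R⁻¹ := by
  have hinv : W⁻¹ * W = 1 := Matrix.nonsing_inv_mul W (isUnit_det_of_mem_scaledUnitary hR hW)
  have hstar : (W⁻¹)ᴴ = ((R ^ 2 : ℝ) : ℂ)⁻¹ • W := by
    rw [inv_eq_of_mem_scaledUnitary hR hW, Matrix.conjTranspose_smul,
      Matrix.conjTranspose_conjTranspose, star_inv₀, Complex.star_def, Complex.conj_ofReal]
  change W⁻¹ * (W⁻¹)ᴴ = _
  rw [hstar, Matrix.mul_smul, hinv, inv_pow, Complex.ofReal_inv]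

lemma det_sub_ne_zero_of_posDef {𝕜 : Type*} [RCLike 𝕜] {W Z : Matrix n n 𝕜}
    (h : (W * Wᴴ - Z * Zᴴ).PosDef) : (W - Z).det ≠ 0 := by
  intro hdet
  obtain ⟨v, hv, hvWZ⟩ := Matrix.exists_vecMul_eq_zero_iff.mpr hdet
  have hvec : v ᵥ* W = v ᵥ* Z := by rwa [Matrix.vecMul_sub, sub_eq_zero] at hvWZ
  have hquad (A : Matrix n n 𝕜) : v ⬝ᵥ (A * Aᴴ) *ᵥ star v = (v ᵥ* A) ⬝ᵥ star (v ᵥ* A) := by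
    rw [Matrix.star_vecMul, Matrix.dotProduct_mulVec, Matrix.dotProduct_mulVec,
      Matrix.vecMul_vecMul]
  have hpos := h.dotProduct_mulVec_pos (x := star v) (by simpa using hv)
  rw [star_star, Matrix.sub_mulVec, dotProduct_sub, hquad, hquad, hvec, sub_self] at hpos
  exact hpos.false

lemma smul_mem_contractionDomain {Z : Matrix n n ℂ} (hZ : Z ∈ contractionDomain n R) {ω : ℂ}
    (hω : ‖ω‖ ≤ 1) : ω • Z ∈ contractionDomain n R := by
  have hdefect : (0 : ℂ) ≤ ((1 - ‖ω‖ ^ 2 : ℝ) : ℂ) := by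
    exact_mod_cast sub_nonneg.mpr (pow_le_one₀ (norm_nonneg ω) hω)
  have hgap : ((1 - ‖ω‖ ^ 2 : ℝ) : ℂ) • (Z * Zᴴ) = Z * Zᴴ - (ω • Z) * (ω • Z)ᴴ := by
    rw [Matrix.conjTranspose_smul, Matrix.smul_mul, Matrix.mul_smul, smul_smul, Complex.star_def,
      Complex.mul_conj', Complex.ofReal_sub, sub_smul, Complex.ofReal_one, one_smul,
      Complex.ofReal_pow]
  have hsum := Matrix.PosDef.add_posSemidef hZ
    ((Matrix.posSemidef_self_mul_conjTranspose Z).smul hdefect)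
  rwa [hgap, sub_add_sub_cancel] at hsum

lemma det_sub_ne_zero {W Z : Matrix n n ℂ} (hW : W ∈ scaledUnitary n R)
    (hZ : Z ∈ contractionDomain n R) : (W - Z).det ≠ 0 := by
  apply det_sub_ne_zero_of_posDef
  rwa [show W * Wᴴ = _ from hW]

lemma ne_zero_of_mem_contractionDomain [Nonempty n] {Z : Matrix n n ℂ}
    (hZ : Z ∈ contractionDomain n R) : R ≠ 0 := by
  rintro rfl
  have hzero : (0 : Matrix n n ℂ) ∈ scaledUnitary n 0 := by simp [scaledUnitary]
  have hne := det_sub_ne_zero hzero (smul_mem_contractionDomain hZ (ω := 0) (by simp))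
  simp at hne

lemma det_one_sub_mul_inv {K : Type*} [Field K] {W : Matrix n n K} (hW : IsUnit W.det)
    (Z : Matrix n n K) : (1 - Z * W⁻¹).det = (W - Z).det / W.det := by
  rw [eq_div_iff hW.ne_zero, ← Matrix.det_mul, sub_mul, one_mul, mul_assoc,
    Matrix.nonsing_inv_mul W hW, mul_one]

lemma det_one_sub_mul_ne_zero (hR : R ≠ 0) {V Z : Matrix n n ℂ} (hV : V ∈ scaledUnitary n R⁻¹)
    (hZ : Z ∈ contractionDomain n R) : (1 - Z * V).det ≠ 0 := by
  have hdetV := isUnit_det_of_mem_scaledUnitary (inv_ne_zero hR) hV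
  have hVinv : V⁻¹ ∈ scaledUnitary n R := by
    simpa using inv_mem_scaledUnitary (inv_ne_zero hR) hV
  have hdetVinv := isUnit_det_of_mem_scaledUnitary hR hVinv
  have h := det_one_sub_mul_inv hdetVinv Z
  rw [Matrix.nonsing_inv_nonsing_inv V hdetV] at h
  rw [h]
  exact div_ne_zero (det_sub_ne_zero hVinv hZ) hdetVinv.ne_zero

end ScaledUnitary

section DetKernel

variable {n : Type*} [Fintype n] [DecidableEq n] {R : ℝ} {Z₁ Z₂ : Matrix n n ℂ}

/-- The integrand `(det W)^(-m) / (det(W - Z₁) det(W - Z₂))`, multiplied by `(det W)²` and written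
as a function of `V = W⁻¹`; in this variable it is holomorphic at the origin. -/
def detKernel (m : ℕ) (Z₁ Z₂ V : Matrix n n ℂ) : ℂ :=
  V.det ^ m / ((1 - Z₁ * V).det * (1 - Z₂ * V).det)

lemma detKernel_inv (m : ℕ) {W : Matrix n n ℂ} (hW : IsUnit W.det) :
    detKernel m Z₁ Z₂ W⁻¹ =
      W.det ^ 2 * (W.det ^ (-m : ℤ) / ((W - Z₁).det * (W - Z₂).det)) := by
  rw [detKernel, det_one_sub_mul_inv hW, det_one_sub_mul_inv hW, Matrix.det_nonsing_inv,
    Ring.inverse_eq_inv', div_mul_div_comm, div_div_eq_mul_div, zpow_neg, zpow_natCast, inv_pow]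
  ring

lemma detKernel_zero [Nonempty n] (m : ℕ) :
    detKernel m Z₁ Z₂ 0 = if m = 0 then 1 else 0 := by
  simp [detKernel, zero_pow_eq]

lemma continuousOn_detKernel (m : ℕ) (hR : R ≠ 0) (hZ₁ : Z₁ ∈ contractionDomain n R)
    (hZ₂ : Z₂ ∈ contractionDomain n R) :
    ContinuousOn (detKernel m Z₁ Z₂) (scaledUnitary n R⁻¹) :=
  ContinuousOn.div (by fun_prop) (by fun_prop) fun _ hV =>
    mul_ne_zero (det_one_sub_mul_ne_zero hR hV hZ₁) (det_one_sub_mul_ne_zero hR hV hZ₂)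

lemma differentiable_det {𝕜 E : Type*} [NontriviallyNormedField 𝕜] [NormedAddCommGroup E]
    [NormedSpace 𝕜 E] {A : E → Matrix n n 𝕜} (hA : ∀ i j, Differentiable 𝕜 fun x => A x i j) :
    Differentiable 𝕜 fun x => (A x).det := by
  simp only [Matrix.det_apply']
  fun_prop

lemma diffContOnCl_detKernel_smul (m : ℕ) (hR : R ≠ 0) (hZ₁ : Z₁ ∈ contractionDomain n R)
    (hZ₂ : Z₂ ∈ contractionDomain n R) {V : Matrix n n ℂ} (hV : V ∈ scaledUnitary n R⁻¹) :
    DiffContOnCl ℂ (fun ω : ℂ => detKernel m Z₁ Z₂ (ω • V)) (Metric.ball 0 1) := by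
  have hnum : Differentiable ℂ fun ω : ℂ => (ω • V).det :=
    differentiable_det fun i j => by simp only [Matrix.smul_apply]; fun_prop
  have hden (Z : Matrix n n ℂ) : Differentiable ℂ fun ω : ℂ => (1 - Z * (ω • V)).det :=
    differentiable_det fun i j => by
      simp only [Matrix.mul_smul, Matrix.sub_apply, Matrix.smul_apply]; fun_prop
  have hne {Z : Matrix n n ℂ} (hZ : Z ∈ contractionDomain n R) {ω : ℂ} (hω : ‖ω‖ ≤ 1) :
      (1 - Z * (ω • V)).det ≠ 0 := by
    rw [Matrix.mul_smul, ← Matrix.smul_mul]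
    exact det_one_sub_mul_ne_zero hR hV (smul_mem_contractionDomain hZ hω)
  apply DifferentiableOn.diffContOnCl
  rw [closure_ball _ one_ne_zero]
  intro ω hω
  rw [mem_closedBall_zero_iff] at hω
  exact (((hnum ω).pow m).div ((hden Z₁ ω).mul (hden Z₂ ω))
    (mul_ne_zero (hne hZ₁ hω) (hne hZ₂ hω))).differentiableWithinAt

end DetKernel

section Parametrization

lemma quaternionMatrix_mul_conjTranspose {K : Type*} [CommRing K] [StarRing K] (a b : K) :
    !![a, b; -star b, star a] * !![a, b; -star b, star a]ᴴ =
      (a * star a + b * star b) • (1 : Matrix (Fin 2) (Fin 2) K) := by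
  ext i j
  fin_cases i <;> fin_cases j <;> simp [Matrix.mul_apply, Fin.sum_univ_two] <;> ring

variable (R α φ θ ψ : ℝ)

lemma exists_Wparam_eq_smul :
    ∃ a b : ℂ, a * star a + b * star b = 1 ∧
      Wparam R α φ θ ψ = ((R : ℂ) * Complex.exp (Complex.I * α)) • !![a, b; -star b, star a] := by
  refine ⟨Complex.exp (Complex.I * (φ + ψ) / 2) * (Real.cos (θ / 2) : ℂ),
    Complex.I * Complex.exp (Complex.I * (φ - ψ) / 2) * (Real.sin (θ / 2) : ℂ), ?_, ?_⟩
  · rw [Complex.star_def, Complex.mul_conj', Complex.mul_conj']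
    norm_cast
    simp [Complex.norm_exp, -Complex.ofReal_cos, -Complex.ofReal_sin]
  · simp only [Wparam, Complex.star_def, map_mul, ← Complex.exp_conj, map_div₀, map_add, map_sub,
      Complex.conj_I, Complex.conj_ofReal, Complex.conj_ofNat, neg_mul, neg_neg]
    rw [show -(Complex.I * ((φ : ℂ) - ψ)) = Complex.I * (ψ - φ) by ring]

lemma det_Wparam : (Wparam R α φ θ ψ).det = ((R : ℂ) * Complex.exp (Complex.I * α)) ^ 2 := by
  obtain ⟨a, b, hab, hW⟩ := exists_Wparam_eq_smul R α φ θ ψ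
  rw [hW, Matrix.det_smul, Fintype.card_fin, Matrix.det_fin_two_of, mul_neg, sub_neg_eq_add, hab,
    mul_one]

lemma Wparam_mem_scaledUnitary : Wparam R α φ θ ψ ∈ scaledUnitary (Fin 2) R := by
  obtain ⟨a, b, hab, hW⟩ := exists_Wparam_eq_smul R α φ θ ψ
  have hscalar : ((R : ℂ) * Complex.exp (Complex.I * α)) *
      star ((R : ℂ) * Complex.exp (Complex.I * α)) = ((R ^ 2 : ℝ) : ℂ) := by
    rw [Complex.star_def, Complex.mul_conj']
    norm_cast
    simp [Complex.norm_exp]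
  change _ * _ = _
  rw [hW, Matrix.conjTranspose_smul, Matrix.smul_mul, Matrix.mul_smul,
    quaternionMatrix_mul_conjTranspose, hab, one_smul, smul_smul, hscalar]

lemma Wparam_eq_exp_smul :
    Wparam R α φ θ ψ = Complex.exp (Complex.I * α) • Wparam R 0 φ θ ψ := by
  rw [Wparam, Wparam, smul_smul, Complex.ofReal_zero, mul_zero, Complex.exp_zero, mul_one, mul_comm]

lemma Wparam_add_pi_left : Wparam R (α + π) φ θ ψ = -Wparam R α φ θ ψ := by
  rw [Wparam_eq_exp_smul, Wparam_eq_exp_smul R α, Complex.ofReal_add, mul_add,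
    mul_comm Complex.I (π : ℂ), Complex.exp_add_pi_mul_I, neg_smul]

lemma Wparam_add_two_pi_right : Wparam R α φ θ (ψ + 2 * π) = -Wparam R α φ θ ψ := by
  have hadd {z w : ℂ} (hzw : w = z + π * Complex.I) : Complex.exp w = -Complex.exp z := by
    rw [hzw, Complex.exp_add_pi_mul_I]
  have hsub {z w : ℂ} (hzw : w = z - π * Complex.I) : Complex.exp w = -Complex.exp z := by
    rw [hzw, Complex.exp_sub_pi_mul_I]
  have h₀₀ : Complex.exp (Complex.I * (φ + (ψ + 2 * π : ℝ)) / 2) =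
      -Complex.exp (Complex.I * (φ + ψ) / 2) := hadd (by push_cast; ring)
  have h₀₁ : Complex.exp (Complex.I * (φ - (ψ + 2 * π : ℝ)) / 2) =
      -Complex.exp (Complex.I * (φ - ψ) / 2) := hsub (by push_cast; ring)
  have h₁₀ : Complex.exp (Complex.I * ((ψ + 2 * π : ℝ) - φ) / 2) =
      -Complex.exp (Complex.I * (ψ - φ) / 2) := hadd (by push_cast; ring)
  have h₁₁ : Complex.exp (-Complex.I * (φ + (ψ + 2 * π : ℝ)) / 2) =
      -Complex.exp (-Complex.I * (φ + ψ) / 2) := hsub (by push_cast; ring)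
  rw [Wparam, Wparam, h₀₀, h₀₁, h₁₀, h₁₁, ← smul_neg]
  simp

lemma inv_Wparam (hR : R ≠ 0) :
    (Wparam R α φ θ ψ)⁻¹ = Complex.exp (-(Complex.I * α)) • (Wparam R 0 φ θ ψ)⁻¹ := by
  have hdet := isUnit_det_of_mem_scaledUnitary hR (Wparam_mem_scaledUnitary R 0 φ θ ψ)
  rw [Wparam_eq_exp_smul]
  apply Matrix.inv_eq_left_inv
  rw [Matrix.smul_mul, Matrix.mul_smul, Matrix.nonsing_inv_mul _ hdet, smul_smul, ← Complex.exp_add,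
    neg_add_cancel, Complex.exp_zero, one_smul]

lemma continuous_Wparam :
    Continuous fun p : ((ℝ × ℝ) × ℝ) × ℝ => Wparam R p.1.1.1 p.1.1.2 p.1.2 p.2 := by
  unfold Wparam
  refine Continuous.fun_smul (by fun_prop) (continuous_matrix fun i j => ?_)
  fin_cases i <;> fin_cases j <;>
    simp only [Fin.zero_eta, Fin.mk_one, Matrix.of_apply, Matrix.cons_val', Matrix.cons_val_zero,
      Matrix.cons_val_one, Matrix.cons_val_fin_one] <;>
    fun_prop

lemma continuous_inv_Wparam (hR : R ≠ 0) :
    Continuous fun p : ((ℝ × ℝ) × ℝ) × ℝ => (Wparam R p.1.1.1 p.1.1.2 p.1.2 p.2)⁻¹ := by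
  simp only [fun α φ θ ψ => inv_eq_of_mem_scaledUnitary hR (Wparam_mem_scaledUnitary R α φ θ ψ)]
  exact Continuous.const_smul (continuous_Wparam R).matrix_conjTranspose (((R ^ 2 : ℝ) : ℂ)⁻¹)

end Parametrization

section Integrals

variable {E : Type*} [NormedAddCommGroup E] [NormedSpace ℝ E]

lemma integral_integral_comm_of_continuous {f : ℝ → ℝ → E} (hf : Continuous f.uncurry)
    (a b c d : ℝ) :
    ∫ x in a..b, ∫ y in c..d, f x y = ∫ y in c..d, ∫ x in a..b, f x y := by
  apply MeasureTheory.intervalIntegral_intervalIntegral_swap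
  apply (hf.continuousOn.integrableOn_compact (K := Set.uIcc a b ×ˢ Set.uIcc c d)
    (isCompact_uIcc.prod isCompact_uIcc)).mono_set
  exact Set.prod_mono Set.uIoc_subset_uIcc Set.uIoc_subset_uIcc

lemma two_smul_integral_integral_of_shift {f : ℝ → ℝ → E} (hf : Continuous f.uncurry) {a b : ℝ}
    (hshift : ∀ x y, f (x + a) y = f x (y + b)) (hper : ∀ x y, f x (y + 2 * b) = f x y) :
    2 • ∫ x in 0..a, ∫ y in -b..b, f x y = ∫ y in -b..b, ∫ x in 0..2 * a, f x y := by
  have hcont : Continuous fun x => ∫ y in -b..b, f x y :=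
    intervalIntegral.continuous_parametric_intervalIntegral_of_continuous' hf (-b) b
  have hperiodic : Function.Periodic (fun x => ∫ y in -b..b, f x y) a := fun x =>
    calc ∫ y in -b..b, f (x + a) y
      _ = ∫ y in (-b + b)..(b + b), f x y := by
        simp only [hshift, intervalIntegral.integral_comp_add_right]
      _ = ∫ y in -b..b, f x y := by
        have h := Function.Periodic.intervalIntegral_add_eq (hper x) (-b + b) (-b)
        convert h using 2 <;> ring
  have hdouble := hperiodic.intervalIntegral_add_zsmul_eq 2 0 fun _ _ => hcont.intervalIntegrable ..
  rw [zero_add, zero_add, ofNat_zsmul, ofNat_zsmul, nsmul_eq_mul, Nat.cast_ofNat] at hdouble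
  rw [← hdouble, integral_integral_comm_of_continuous hf]

lemma integral_integral_integral_integral_rotate {f : ℝ → ℝ → ℝ → ℝ → E}
    (hf : Continuous fun p : ((ℝ × ℝ) × ℝ) × ℝ => f p.1.1.1 p.1.1.2 p.1.2 p.2)
    (a₁ b₁ a₂ b₂ a₃ b₃ a₄ b₄ : ℝ) :
    ∫ x in a₁..b₁, ∫ y in a₂..b₂, ∫ z in a₃..b₃, ∫ t in a₄..b₄, f x y z t =
      ∫ y in a₂..b₂, ∫ z in a₃..b₃, ∫ x in a₁..b₁, ∫ t in a₄..b₄, f x y z t := by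
  have hcont₃ : Continuous fun p : (ℝ × ℝ) × ℝ => ∫ t in a₄..b₄, f p.1.1 p.1.2 p.2 t :=
    intervalIntegral.continuous_parametric_intervalIntegral_of_continuous' hf a₄ b₄
  have hcont₂ : Continuous fun p : ℝ × ℝ => ∫ z in a₃..b₃, ∫ t in a₄..b₄, f p.1 p.2 z t :=
    intervalIntegral.continuous_parametric_intervalIntegral_of_continuous' hcont₃ a₃ b₃
  calc ∫ x in a₁..b₁, ∫ y in a₂..b₂, ∫ z in a₃..b₃, ∫ t in a₄..b₄, f x y z t
    _ = ∫ y in a₂..b₂, ∫ x in a₁..b₁, ∫ z in a₃..b₃, ∫ t in a₄..b₄, f x y z t :=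
      integral_integral_comm_of_continuous
        (f := fun x y => ∫ z in a₃..b₃, ∫ t in a₄..b₄, f x y z t) hcont₂ ..
    _ = ∫ y in a₂..b₂, ∫ z in a₃..b₃, ∫ x in a₁..b₁, ∫ t in a₄..b₄, f x y z t := by
      congr 1 with y
      exact integral_integral_comm_of_continuous (f := fun x z => ∫ t in a₄..b₄, f x y z t)
        (hcont₃.comp (f := fun p : ℝ × ℝ => ((p.1, y), p.2)) (by fun_prop)) ..

end Integrals

lemma integral_exp_neg_mul_I {E : Type*} [NormedAddCommGroup E] [NormedSpace ℂ E] [CompleteSpace E]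
    {f : ℂ → E} (hf : DiffContOnCl ℂ f (Metric.ball 0 1)) :
    ∫ α in 0..2 * π, f (Complex.exp (-(Complex.I * α))) = (2 * π) • f 0 := by
  have hmean := DiffContOnCl.circleAverage (R := 1) (by rwa [abs_one])
  rw [← Real.circleAverage_zero_one_congr_inv, Real.circleAverage_def,
    inv_smul_eq_iff₀ (by positivity)] at hmean
  rw [← hmean]
  congr 1 with α
  rw [circleMap_zero, Complex.ofReal_one, one_mul, Complex.exp_neg, mul_comm]

section MeanValue

variable {R : ℝ} {h : Matrix (Fin 2) (Fin 2) ℂ → ℂ}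

lemma continuous_comp_inv_Wparam (hR : R ≠ 0) (hcont : ContinuousOn h (scaledUnitary (Fin 2) R⁻¹)) :
    Continuous fun p : ((ℝ × ℝ) × ℝ) × ℝ => h (Wparam R p.1.1.1 p.1.1.2 p.1.2 p.2)⁻¹ :=
  hcont.comp_continuous (continuous_inv_Wparam R hR) fun _ =>
    inv_mem_scaledUnitary hR (Wparam_mem_scaledUnitary ..)

lemma integral_integral_comp_inv_Wparam (hR : R ≠ 0)
    (hcont : ContinuousOn h (scaledUnitary (Fin 2) R⁻¹))
    (hdiff : ∀ V ∈ scaledUnitary (Fin 2) R⁻¹,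
      DiffContOnCl ℂ (fun ω : ℂ => h (ω • V)) (Metric.ball 0 1)) (φ θ : ℝ) :
    ∫ α in 0..π, ∫ ψ in -(2 * π)..2 * π, h (Wparam R α φ θ ψ)⁻¹ = 4 * π ^ 2 * h 0 := by
  have hcontαψ : Continuous fun p : ℝ × ℝ => h (Wparam R p.1 φ θ p.2)⁻¹ :=
    (continuous_comp_inv_Wparam hR hcont).comp (f := fun p : ℝ × ℝ => (((p.1, φ), θ), p.2))
      (by fun_prop)
  have hdouble := two_smul_integral_integral_of_shift
    (f := fun α ψ => h (Wparam R α φ θ ψ)⁻¹) hcontαψ (a := π) (b := 2 * π)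
    (fun α ψ => by rw [Wparam_add_pi_left, Wparam_add_two_pi_right])
    (fun α ψ => by
      rw [two_mul (2 * π), ← add_assoc, Wparam_add_two_pi_right, Wparam_add_two_pi_right, neg_neg])
  have hmean (ψ : ℝ) : ∫ α in 0..2 * π, h (Wparam R α φ θ ψ)⁻¹ = (2 * π) • h 0 := by
    have hV := inv_mem_scaledUnitary hR (Wparam_mem_scaledUnitary R 0 φ θ ψ)
    calc ∫ α in 0..2 * π, h (Wparam R α φ θ ψ)⁻¹
      _ = ∫ α in 0..2 * π, h (Complex.exp (-(Complex.I * α)) • (Wparam R 0 φ θ ψ)⁻¹) := by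
        congr 1 with α
        rw [inv_Wparam R α φ θ ψ hR]
      _ = (2 * π) • h 0 := by rw [integral_exp_neg_mul_I (hdiff _ hV), zero_smul]
  simp only [hmean, intervalIntegral.integral_const, nsmul_eq_mul, Complex.real_smul] at hdouble
  push_cast at hdouble
  linear_combination hdouble / 2

theorem U2int_eq_of_det_sq_mul_eq_comp_inv (hR : R ≠ 0) {g : Matrix (Fin 2) (Fin 2) ℂ → ℂ}
    (hgh : ∀ W ∈ scaledUnitary (Fin 2) R, W.det ^ 2 * g W = h W⁻¹)
    (hcont : ContinuousOn h (scaledUnitary (Fin 2) R⁻¹))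
    (hdiff : ∀ V ∈ scaledUnitary (Fin 2) R⁻¹,
      DiffContOnCl ℂ (fun ω : ℂ => h (ω • V)) (Metric.ball 0 1)) :
    U2int R g = -(2 * π ^ 3 * Complex.I) * h 0 := by
  have hdensity (α φ θ ψ : ℝ) :
      g (Wparam R α φ θ ψ) * ((R : ℂ) ^ 4 / (8 * Complex.I)) * Complex.exp (4 * Complex.I * α) *
        (Real.sin θ : ℂ) =
      Real.sin θ / (8 * Complex.I) * h (Wparam R α φ θ ψ)⁻¹ := by
    have hexp : Complex.exp (4 * Complex.I * α) = Complex.exp (Complex.I * α) ^ 4 := by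
      rw [← Complex.exp_nat_mul, Nat.cast_ofNat, mul_assoc]
    rw [← hgh _ (Wparam_mem_scaledUnitary R α φ θ ψ), det_Wparam, hexp]
    ring
  have hcont₄ : Continuous fun p : ((ℝ × ℝ) × ℝ) × ℝ =>
      Real.sin p.1.2 / (8 * Complex.I) * h (Wparam R p.1.1.1 p.1.1.2 p.1.2 p.2)⁻¹ :=
    Continuous.mul (by fun_prop) (continuous_comp_inv_Wparam hR hcont)
  simp only [U2int, hdensity]
  rw [integral_integral_integral_integral_rotate hcont₄]
  simp only [intervalIntegral.integral_const_mul,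
    integral_integral_comp_inv_Wparam hR hcont hdiff, intervalIntegral.integral_mul_const,
    intervalIntegral.integral_div, intervalIntegral.integral_ofReal, integral_sin,
    intervalIntegral.integral_const, Complex.real_smul, Real.cos_zero, Real.cos_pi]
  push_cast
  field_simp
  simp only [Complex.I_sq]
  ring

end MeanValue

theorem stmt17_general (R : ℝ) (k : ℤ) (hk : k ≤ 0) (Z₁ Z₂ : Matrix (Fin 2) (Fin 2) ℂ)
    (hZ₁ : Z₁ ∈ contractionDomain (Fin 2) R) (hZ₂ : Z₂ ∈ contractionDomain (Fin 2) R) :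
    (Complex.I / (2 * (π : ℂ) ^ 3)) *
      U2int R (fun W => W.det ^ k / ((W - Z₁).det * (W - Z₂).det))
    = if k = 0 then 1 else 0 := by
  obtain ⟨m, rfl⟩ := Int.exists_eq_neg_ofNat hk
  have hR : R ≠ 0 := ne_zero_of_mem_contractionDomain hZ₁
  have hpi : (π : ℂ) ≠ 0 := Complex.ofReal_ne_zero.mpr Real.pi_ne_zero
  have hnormalize (c : ℂ) :
      Complex.I / (2 * (π : ℂ) ^ 3) * (-(2 * (π : ℂ) ^ 3 * Complex.I) * c) = c := by
    field_simp
    rw [Complex.I_sq, neg_one_mul, neg_neg]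
  rw [U2int_eq_of_det_sq_mul_eq_comp_inv hR
      (fun W hW => (detKernel_inv m (isUnit_det_of_mem_scaledUnitary hR hW)).symm)
      (continuousOn_detKernel m hR hZ₁ hZ₂)
      (fun V hV => diffContOnCl_detKernel_smul m hR hZ₁ hZ₂ hV), hnormalize, detKernel_zero]
  simp only [neg_eq_zero, Nat.cast_eq_zero]

/-- For `k ∈ {0,−1,−2}` and `Z₁, Z₂ ∈ 𝔻⁺_R`,
`(i/2π³) ∫_{U(2)_R} (det W)^k/(det(W−Z₁)·det(W−Z₂)) dV` equals `1` if `k = 0` and `0` if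
`k = −1` or `k = −2`. -/
theorem stmt17 (R : ℝ) (hR : 0 < R) (k : ℤ) (hk : k = 0 ∨ k = -1 ∨ k = -2)
    (Z₁ Z₂ : Matrix (Fin 2) (Fin 2) ℂ)
    (hZ₁ : (((R ^ 2 : ℝ) : ℂ) • (1 : Matrix (Fin 2) (Fin 2) ℂ)
             - Z₁ * Z₁.conjTranspose).PosDef)
    (hZ₂ : (((R ^ 2 : ℝ) : ℂ) • (1 : Matrix (Fin 2) (Fin 2) ℂ)
             - Z₂ * Z₂.conjTranspose).PosDef) :
    (Complex.I / (2 * (Real.pi : ℂ) ^ 3)) *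
      U2int R (fun W => W.det ^ k / ((W - Z₁).det * (W - Z₂).det))
    = if k = 0 then 1 else 0 :=
  stmt17_general R k (by lia) Z₁ Z₂ hZ₁ hZ₂
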